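/- For d even, the orbit of the basis vector e_p under the group G_d generated by {L_q : q ∈ A_d} is exactly the set of primitive vectors v ∈ ℤ^{A_d} whose reduction mod 2 lies in the set E = {ē*} ∪ {ē_q : q ∈ A_d}. -/

import Mathlib

open Matrix

/-- The matrix of the operator `L_p`. -/
def L (d : ℕ) (p : Fin d) : Matrix (Fin d) (Fin d) ℤ :=
  Matrix.of fun r q => if q = p then (if r < p then -1 else 1) else (if r = q then 1 else 0)

/-- The hyperelliptic Rauzy–Veech group `G_d`, generated by the operators `L_p`. -/
def Gd (d : ℕ) : Subgroup (Matrix (Fin d) (Fin d) ℤ)ˣ :=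
  Subgroup.closure {u : (Matrix (Fin d) (Fin d) ℤ)ˣ |
    ∃ p : Fin d, (u : Matrix (Fin d) (Fin d) ℤ) = L d p}

/-- The set `E = {ē*} ∪ {ē_q : q ∈ A_d}` in `(ℤ/2)^{A_d}`. -/
def Eset (d : ℕ) : Set (Fin d → ZMod 2) :=
  insert (fun _ => 1) (Set.range fun q : Fin d => Pi.single q (1 : ZMod 2))


/-- Explicit action of `L_p`. -/
def Lact {d : ℕ} (p : Fin d) (v : Fin d → ℤ) : Fin d → ℤ := fun r =>
  if r < p then v r - v p else if r = p then v p else v r + v p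

/-- Explicit action of the inverse of `L_p`. -/
def Lact' {d : ℕ} (p : Fin d) (v : Fin d → ℤ) : Fin d → ℤ := fun r =>
  if r < p then v r + v p else if r = p then v p else v r - v p

def Linv (d : ℕ) (p : Fin d) : Matrix (Fin d) (Fin d) ℤ :=
  Matrix.of fun r q => if q = p then (if p < r then -1 else 1) else (if r = q then 1 else 0)

theorem L_mulVec {d : ℕ} (p : Fin d) (v : Fin d → ℤ) : (L d p).mulVec v = Lact p v := by
  ext r
  have h : ∀ q, L d p r q * v q =
      (if q = p then (if r < p then - v p else if r = p then 0 else v p) else 0) +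
        (if r = q then v q else 0) := by
    intro q
    simp only [L, Matrix.of_apply]
    split_ifs <;> subst_vars <;> first | omega | simp_all
  simp only [Matrix.mulVec, dotProduct, h, Finset.sum_add_distrib, Finset.sum_ite_eq,
    Finset.sum_ite_eq', Finset.mem_univ, if_true, Lact]
  split_ifs <;> subst_vars <;> first | omega | simp_all

theorem Linv_mulVec {d : ℕ} (p : Fin d) (v : Fin d → ℤ) : (Linv d p).mulVec v = Lact' p v := by
  ext r
  have h : ∀ q, Linv d p r q * v q =
      (if q = p then (if r < p then v p else if r = p then 0 else - v p) else 0) +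
        (if r = q then v q else 0) := by
    intro q
    simp only [Linv, Matrix.of_apply]
    split_ifs <;> subst_vars <;> first | omega | simp_all
  simp only [Matrix.mulVec, dotProduct, h, Finset.sum_add_distrib, Finset.sum_ite_eq,
    Finset.sum_ite_eq', Finset.mem_univ, if_true, Lact']
  split_ifs <;> subst_vars <;> first | omega | simp_all

theorem Lact_Lact' {d : ℕ} (p : Fin d) (v : Fin d → ℤ) : Lact p (Lact' p v) = v := by
  ext r
  simp only [Lact, Lact', lt_irrefl, if_false, if_true]
  split_ifs <;> subst_vars <;> simp_all

theorem Lact'_Lact {d : ℕ} (p : Fin d) (v : Fin d → ℤ) : Lact' p (Lact p v) = v := by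
  ext r
  simp only [Lact, Lact', lt_irrefl, if_false, if_true]
  split_ifs <;> subst_vars <;> simp_all

def Lunit (d : ℕ) (p : Fin d) : (Matrix (Fin d) (Fin d) ℤ)ˣ where
  val := L d p
  inv := Linv d p
  val_inv := by
    apply Matrix.ext_of_mulVec_single
    intro i
    rw [← Matrix.mulVec_mulVec, Linv_mulVec, L_mulVec, Lact_Lact', Matrix.one_mulVec]
  inv_val := by
    apply Matrix.ext_of_mulVec_single
    intro i
    rw [← Matrix.mulVec_mulVec, Linv_mulVec, L_mulVec, Lact'_Lact, Matrix.one_mulVec]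

/-- Same orbit. -/
def Orb {d : ℕ} (v w : Fin d → ℤ) : Prop :=
  ∃ B ∈ Gd d, (B : Matrix (Fin d) (Fin d) ℤ).mulVec v = w

theorem Orb.refl {d : ℕ} (v : Fin d → ℤ) : Orb v v := ⟨1, one_mem _, by simp⟩

theorem Orb.symm {d : ℕ} {v w : Fin d → ℤ} : Orb v w → Orb w v := by
  rintro ⟨B, hB, rfl⟩
  exact ⟨B⁻¹, inv_mem hB, by rw [Matrix.mulVec_mulVec, Units.inv_mul, Matrix.one_mulVec]⟩

theorem Orb.trans {d : ℕ} {u v w : Fin d → ℤ} : Orb u v → Orb v w → Orb u w := by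
  rintro ⟨B, hB, rfl⟩ ⟨C, hC, rfl⟩
  exact ⟨C * B, mul_mem hC hB, by rw [Matrix.mulVec_mulVec, Units.val_mul]⟩

theorem Orb.act {d : ℕ} (p : Fin d) (v : Fin d → ℤ) : Orb v (Lact p v) :=
  ⟨Lunit d p, Subgroup.subset_closure ⟨p, rfl⟩, L_mulVec p v⟩

/-- The target set. -/
def Good {d : ℕ} (v : Fin d → ℤ) : Prop :=
  Finset.univ.gcd v = 1 ∧ (fun i => (v i : ZMod 2)) ∈ Eset d

theorem gcd_one_iff {d : ℕ} (v : Fin d → ℤ) :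
    Finset.univ.gcd v = 1 ↔ ∀ k : ℤ, (∀ i, k ∣ v i) → k ∣ 1 := by
  constructor
  · intro h k hk
    rw [← h]
    exact Finset.dvd_gcd fun i _ => hk i
  · intro h
    have h1 := h _ fun i => Finset.gcd_dvd (f := v) (Finset.mem_univ i)
    rw [← Finset.normalize_gcd]
    exact normalize_eq_one.2 (isUnit_of_dvd_one h1)

theorem dvd_act {d : ℕ} (p : Fin d) (v : Fin d → ℤ) (k : ℤ) :
    (∀ i, k ∣ Lact p v i) ↔ ∀ i, k ∣ v i := by
  constructor
  · intro h i
    rw [← Lact'_Lact p v]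
    simp only [Lact']
    split_ifs
    · exact dvd_add (h _) (h _)
    · exact h _
    · exact dvd_sub (h _) (h _)
  · intro h i
    simp only [Lact]
    split_ifs
    · exact dvd_sub (h _) (h _)
    · exact h _
    · exact dvd_add (h _) (h _)

def act2 {d : ℕ} (p : Fin d) (x : Fin d → ZMod 2) : Fin d → ZMod 2 := fun r =>
  if r = p then x p else x r + x p

theorem act2_act2 {d : ℕ} (p : Fin d) (x : Fin d → ZMod 2) : act2 p (act2 p x) = x := by
  ext r
  simp only [act2, if_true]
  split_ifs with h
  · rw [h]
  · rw [add_assoc, CharTwo.add_self_eq_zero, add_zero]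

theorem cast_Lact {d : ℕ} (p : Fin d) (v : Fin d → ℤ) :
    (fun i => (Lact p v i : ZMod 2)) = act2 p (fun i => (v i : ZMod 2)) := by
  ext r
  simp only [Lact, act2]
  split_ifs with h1 h2 <;> subst_vars
  · exact absurd h1 (lt_irrefl _)
  · push_cast; rw [CharTwo.sub_eq_add]
  · rfl
  · push_cast; rfl

theorem act2_mem {d : ℕ} (p : Fin d) (x : Fin d → ZMod 2) (hx : x ∈ Eset d) :
    act2 p x ∈ Eset d := by
  rcases hx with rfl | ⟨q, rfl⟩
  · right
    refine ⟨p, ?_⟩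
    ext r
    by_cases h : r = p
    · simp [act2, h]
    · simp [act2, h, CharTwo.add_self_eq_zero]
  · by_cases hq : q = p
    · left
      subst hq
      ext r
      by_cases h : r = q <;> simp [act2, h]
    · right
      refine ⟨q, ?_⟩
      ext r
      have : p ≠ q := fun h => hq h.symm
      by_cases h : r = p <;> simp [act2, h, this]

theorem good_act {d : ℕ} (p : Fin d) (v : Fin d → ℤ) : Good (Lact p v) ↔ Good v := by
  unfold Good
  rw [gcd_one_iff, gcd_one_iff, cast_Lact]
  simp only [dvd_act]
  refine and_congr_right fun _ => ⟨fun h => ?_, act2_mem p _⟩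
  rw [← act2_act2 p (fun i => (v i : ZMod 2))]
  exact act2_mem p _ h

theorem good_orb {d : ℕ} {v w : Fin d → ℤ} (h : Orb v w) : Good v → Good w := by
  obtain ⟨B, hB, rfl⟩ := h
  suffices ∀ v, Good ((B : Matrix (Fin d) (Fin d) ℤ).mulVec v) ↔ Good v from (this v).2
  clear v
  induction hB using Subgroup.closure_induction with
  | mem x hx =>
    obtain ⟨p, hp⟩ := hx
    intro v
    rw [hp, L_mulVec, good_act]
  | one => simp
  | mul x y _ _ hx hy =>
    intro v
    rw [Units.val_mul, ← Matrix.mulVec_mulVec, hx, hy]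
  | inv x _ hx =>
    intro v
    rw [← hx, Matrix.mulVec_mulVec, Units.mul_inv, Matrix.one_mulVec]

theorem good_single {d : ℕ} (p : Fin d) : Good (Pi.single p 1 : Fin d → ℤ) := by
  constructor
  · rw [gcd_one_iff]
    intro k hk
    simpa using hk p
  · right
    refine ⟨p, ?_⟩
    ext r
    by_cases h : r = p
    · subst h; simp
    · simp [h]

/-- Hurwitz equivalence of integer lists (reflections of the line). -/
inductive Hz : List ℤ → List ℤ → Prop
  | refl (l) : Hz l l
  | symm {l m} : Hz l m → Hz m l
  | trans {l m n} : Hz l m → Hz m n → Hz l n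
  | swap (a b l) : Hz (a :: b :: l) ((2 * a - b) :: a :: l)
  | cons (a) {l m} : Hz l m → Hz (a :: l) (a :: m)

theorem Hz.length {l m : List ℤ} (h : Hz l m) : l.length = m.length := by
  induction h <;> simp_all

theorem Hz.append {l m : List ℤ} (h : Hz l m) (r : List ℤ) : Hz (l ++ r) (m ++ r) := by
  induction h with
  | refl l => exact .refl _
  | symm _ ih => exact ih.symm
  | trans _ _ ih1 ih2 => exact ih1.trans ih2
  | swap a b l => exact .swap a b _
  | cons a _ ih => exact .cons a ih

theorem Hz.dvd {l m : List ℤ} (h : Hz l m) (k c : ℤ) :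
    (∀ x ∈ l, k ∣ x - c) ↔ (∀ x ∈ m, k ∣ x - c) := by
  induction h with
  | refl l => exact Iff.rfl
  | symm _ ih => exact ih.symm
  | trans _ _ ih1 ih2 => exact ih1.trans ih2
  | swap a b l =>
    simp only [List.forall_mem_cons]
    have e1 : 2 * a - b - c = 2 * (a - c) - (b - c) := by ring
    constructor
    · rintro ⟨h1, h2, h3⟩
      exact ⟨e1 ▸ dvd_sub (h1.mul_left 2) h2, h1, h3⟩
    · rintro ⟨h1, h2, h3⟩
      refine ⟨h2, ?_, h3⟩
      have e2 : b - c = 2 * (a - c) - (2 * a - b - c) := by ring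
      exact e2 ▸ dvd_sub (h2.mul_left 2) h1
  | cons a _ ih => rw [List.forall_mem_cons, List.forall_mem_cons, ih]

theorem Hz.perm {l m : List ℤ} (h : Hz l m) :
    (l.map (fun x : ℤ => (x : ZMod 2))).Perm (m.map (fun x : ℤ => (x : ZMod 2))) := by
  induction h with
  | refl l => exact .refl _
  | symm _ ih => exact ih.symm
  | trans _ _ ih1 ih2 => exact ih1.trans ih2
  | swap a b l =>
    have : ((2 * a - b : ℤ) : ZMod 2) = (b : ZMod 2) := by
      push_cast
      rw [show (2 : ZMod 2) = 0 from rfl, zero_mul, CharTwo.sub_eq_add, zero_add]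
    simp only [List.map_cons, this]
    exact .swap _ _ _
  | cons a _ ih => exact .cons _ ih

/-- Vector of differences with the first element. -/
def dvec (d : ℕ) (l : List ℤ) : Fin d → ℤ := fun k => l.getD (k + 1) 0 - l.getD 0 0

theorem swap_orb {d : ℕ} (v : Fin d → ℤ) (p q : Fin d) (hpq : (q : ℕ) = p + 1) :
    Orb v (fun r => if r = p then 2 * v p - v q else if r = q then v p else v r) := by
  have h1 : Orb v (Lact' p v) := by
    have := Orb.act p (Lact' p v)
    rw [Lact_Lact'] at this
    exact this.symm
  refine (h1.trans ((Orb.act q _).trans (Orb.act p _))).trans ?_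
  convert Orb.refl _ using 1
  ext r
  have hlt : p < q := by rw [Fin.lt_def]; omega
  have hne : p ≠ q := hlt.ne
  have hnl : ¬ q < p := hlt.not_gt
  rcases lt_trichotomy r p with h | h | h
  · have h2 : r < q := h.trans hlt
    simp only [Lact, Lact', h, h2, hlt, hne, hne.symm, hnl, h.ne, h2.ne, lt_irrefl, if_true, if_false]
    ring
  · subst h
    simp only [Lact, Lact', hlt, hne, hne.symm, hnl, lt_irrefl, if_true, if_false]
    ring
  · by_cases h3 : r = q
    · subst h3
      simp only [Lact, Lact', hlt, hne, hne.symm, hnl, lt_irrefl, if_true, if_false]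
      ring
    · have h2 : q < r := by
        rw [Fin.lt_def] at *
        have : (r : ℕ) ≠ q := fun h => h3 (Fin.ext h)
        omega
      simp only [Lact, Lact', h, h2, hlt, hne, hne.symm, hnl, h.ne', h2.ne', h.not_gt, h2.not_gt,
        lt_irrefl, if_true, if_false]
      ring

theorem vec_swap (d : ℕ) (pre l : List ℤ) (a b : ℤ) (hl : (pre ++ a :: b :: l).length = d + 1) :
    Orb (dvec d (pre ++ a :: b :: l)) (dvec d (pre ++ (2 * a - b) :: a :: l)) := by
  rcases pre with _ | ⟨c, pre⟩
  · simp only [List.nil_append, List.length_cons] at hl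
    have h0 : 0 < d := by omega
    refine (Orb.act ⟨0, h0⟩ _).trans ?_
    convert Orb.refl _ using 1
    ext ⟨r, hr⟩
    rcases r with _ | r
    · simp [dvec, Lact]; ring
    · simp [dvec, Lact]; ring
  · simp only [List.cons_append, List.length_cons, List.length_append] at hl
    have hp : pre.length < d := by omega
    have hq : pre.length + 1 < d := by omega
    refine (swap_orb _ ⟨pre.length, hp⟩ ⟨pre.length + 1, hq⟩ rfl).trans ?_
    convert Orb.refl _ using 1
    ext ⟨r, hr⟩
    simp only [dvec, Fin.mk.injEq, List.cons_append, List.getD_cons_succ, List.getD_cons_zero]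
    rcases lt_trichotomy r pre.length with h | h | h
    · rw [if_neg (by omega), if_neg (by omega), List.getD_append _ _ _ _ h,
        List.getD_append _ _ _ _ h]
    · subst h
      rw [if_pos rfl, List.getD_append_right _ _ _ _ (by omega),
        List.getD_append_right _ _ _ _ (by omega), List.getD_append_right _ _ _ _ (by omega)]
      simp
      ring
    · obtain ⟨s, rfl⟩ := Nat.exists_eq_add_of_lt h
      rcases s with _ | s
      · rw [if_neg (by omega), if_pos (by omega), List.getD_append_right _ _ _ _ (by omega),
          List.getD_append_right _ _ _ _ (by omega)]
        simp
      · rw [if_neg (by omega), if_neg (by omega), List.getD_append_right _ _ _ _ (by omega),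
          List.getD_append_right _ _ _ _ (by omega)]
        simp [show pre.length + (s + 1) + 1 - pre.length = s + 1 + 1 by omega]

theorem Hz.orb {l m : List ℤ} (h : Hz l m) (d : ℕ) : ∀ pre : List ℤ,
    (pre ++ l).length = d + 1 → Orb (dvec d (pre ++ l)) (dvec d (pre ++ m)) := by
  induction h with
  | refl l => intros; exact Orb.refl _
  | symm h ih =>
    intro pre hp
    exact (ih pre (by simpa [h.length] using hp)).symm
  | trans h _ ih1 ih2 =>
    intro pre hp
    exact (ih1 pre hp).trans (ih2 pre (by simpa [h.length] using hp))
  | swap a b l => intro pre hp; exact vec_swap d pre l a b hp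
  | cons a _ ih =>
    intro pre hp
    have := ih (pre ++ [a]) (by simpa using hp)
    simpa using this

/-- Move a double entry. -/
theorem Hz.pair (a c : ℤ) (l : List ℤ) : Hz (a :: a :: c :: l) (c :: a :: a :: l) := by
  refine (Hz.cons a (Hz.swap a c l)).trans ((Hz.swap a _ _).trans ?_)
  rw [show 2 * a - (2 * a - c) = c by ring]
  exact .refl _

theorem Hz.swap' (a b : ℤ) (l : List ℤ) : Hz (a :: b :: l) (b :: (2 * b - a) :: l) := by
  have := Hz.swap b (2 * b - a) l
  rw [show 2 * b - (2 * b - a) = a by ring] at this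
  exact this.symm

theorem Hz.flip (a c : ℤ) (l : List ℤ) :
    Hz (a :: a :: c :: l) ((2 * c - a) :: (2 * c - a) :: c :: l) :=
  ((Hz.cons a (Hz.swap' a c l)).trans (Hz.swap' a c _)).trans (Hz.pair _ _ _).symm

theorem Hz.triple (n : ℕ) : ∀ a b c : ℤ, (b - a).natAbs + (c - b).natAbs ≤ n →
    ∃ x y, Hz [a, b, c] [x, x, y] := by
  induction n using Nat.strong_induction_on with
  | _ n ih =>
    intro a b c hn
    by_cases hx : b = a
    · subst hx; exact ⟨_, _, .refl _⟩
    by_cases hy : c = b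
    · subst hy; exact ⟨_, _, (Hz.pair c a []).symm⟩
    have key : ∀ a' b' c' : ℤ, Hz [a, b, c] [a', b', c'] →
        (b' - a').natAbs + (c' - b').natAbs < (b - a).natAbs + (c - b).natAbs →
        ∃ x y, Hz [a, b, c] [x, x, y] := by
      intro a' b' c' h hlt
      obtain ⟨x, y, h'⟩ := ih _ (by omega) a' b' c' le_rfl
      exact ⟨x, y, h.trans h'⟩
    by_cases h1 : (b - a).natAbs ≤ (c - b).natAbs
    · by_cases h2 : (c - a).natAbs < (c - b).natAbs
      · exact key _ _ _ (Hz.swap a b [c]) (by omega)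
      · exact key _ _ _ (Hz.swap' a b [c]) (by omega)
    · by_cases h2 : (c - a).natAbs < (b - a).natAbs
      · exact key _ _ _ (Hz.cons a (Hz.swap' b c [])) (by omega)
      · exact key _ _ _ (Hz.cons a (Hz.swap b c [])) (by omega)

/-- Doubled list followed by a last element. -/
def dbl (c : ℤ) : List ℤ → List ℤ
  | [] => [c]
  | a :: l => a :: a :: dbl c l

theorem exists_dbl (g : ℕ) : ∀ l : List ℤ, l.length = 2 * g + 1 →
    ∃ c as, as.length = g ∧ Hz l (dbl c as) := by
  induction g with
  | zero =>
    intro l hl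
    obtain ⟨c, rfl⟩ := List.length_eq_one_iff.1 hl
    exact ⟨c, [], rfl, .refl _⟩
  | succ g ih =>
    intro l hl
    match l, hl with
    | a :: b :: c :: l, hl =>
      obtain ⟨x, y, h⟩ := Hz.triple _ a b c le_rfl
      obtain ⟨z, as, has, h'⟩ := ih (y :: l) (by simp at hl ⊢; omega)
      exact ⟨z, x :: as, by simp [has], (h.append l).trans ((h'.cons x).cons x)⟩

theorem length_dbl (c : ℤ) (l : List ℤ) : (dbl c l).length = 2 * l.length + 1 := by
  induction l with
  | nil => rfl
  | cons a l ih => simp [dbl, ih]; omega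

theorem mem_dbl (c x : ℤ) (l : List ℤ) : x ∈ dbl c l ↔ x ∈ l ∨ x = c := by
  induction l with
  | nil => simp [dbl]
  | cons a l ih => simp [dbl, ih]; tauto

theorem dbl_shift (c : ℤ) (l : List ℤ) :
    dbl 0 (l.map (· - c)) = (dbl c l).map (· - c) := by
  induction l with
  | nil => simp [dbl]
  | cons a l ih => simp [dbl, ih]

theorem vec_shift (d : ℕ) (c : ℤ) (l : List ℤ) (hl : l.length = d + 1) :
    dvec d (l.map (· - c)) = dvec d l := by
  ext ⟨r, hr⟩
  have h1 : r + 1 < l.length := by omega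
  have h0 : 0 < l.length := by omega
  simp only [dvec]
  rw [List.getD_eq_getElem _ _ (by simpa using h1), List.getD_eq_getElem _ _ (by simpa using h0),
    List.getD_eq_getElem _ _ h1, List.getD_eq_getElem _ _ h0]
  simp

theorem count_dbl (c : ℤ) (l : List ℤ) (t : ZMod 2) :
    ((dbl c l).map (fun x : ℤ => (x : ZMod 2))).count t =
      2 * (l.map (fun x : ℤ => (x : ZMod 2))).count t + if (c : ZMod 2) = t then 1 else 0 := by
  induction l with
  | nil => simp [dbl, List.count_singleton]
  | cons a l ih =>
    simp only [dbl, List.map_cons, List.count_cons, ih, beq_iff_eq]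
    split_ifs <;> omega

theorem K_perm {l m : List ℤ} (h : l.Perm m) : Hz (dbl 0 l) (dbl 0 m) := by
  induction h with
  | nil => exact .refl _
  | cons a _ ih => exact (ih.cons a).cons a
  | swap a b l =>
    exact (Hz.pair b a _).trans (Hz.cons a (Hz.pair b a _))
  | trans _ _ ih1 ih2 => exact ih1.trans ih2

theorem K_neg_last (b : ℤ) (l : List ℤ) : Hz (dbl 0 (l ++ [b])) (dbl 0 (l ++ [-b])) := by
  induction l with
  | nil => simpa [dbl] using Hz.flip b 0 []
  | cons a l ih => exact (ih.cons a).cons a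

theorem K_neg (b : ℤ) (l : List ℤ) : Hz (dbl 0 (b :: l)) (dbl 0 (-b :: l)) :=
  (K_perm (List.perm_append_singleton b l).symm).trans
    ((K_neg_last b l).trans (K_perm (List.perm_append_singleton (-b) l)))

theorem K_sub (a b : ℤ) (l : List ℤ) : Hz (dbl 0 (a :: b :: l)) (dbl 0 ((2 * b - a) :: b :: l)) :=
  Hz.flip a b _

theorem K_add (a b : ℤ) (l : List ℤ) : Hz (dbl 0 (a :: b :: l)) (dbl 0 ((a + 2 * b) :: b :: l)) := by
  have := (K_neg a (b :: l)).trans (K_sub (-a) b l)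
  rwa [show 2 * b - -a = a + 2 * b by ring] at this

theorem K_ones (l : List ℤ) (h : ∀ x ∈ l, x.natAbs = 1) :
    Hz (dbl 0 l) (dbl 0 (List.replicate l.length 1)) := by
  induction l with
  | nil => exact .refl _
  | cons a l ih =>
    have h1 := ih fun x hx => h x (List.mem_cons_of_mem _ hx)
    have h2 : Hz (dbl 0 (a :: l)) (dbl 0 (1 :: l)) := by
      rcases Int.natAbs_eq_iff.1 (h a List.mem_cons_self) with e | e
      · rw [e]; exact .refl _
      · rw [e]; simpa using K_neg (-1) l
    exact h2.trans ((h1.cons 1).cons 1)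

theorem K_main (n : ℕ) : ∀ l : List ℤ, (l.map Int.natAbs).sum ≤ n → l ≠ [] →
    (∀ x ∈ l, Odd x) → (∀ k : ℤ, (∀ x ∈ l, k ∣ x) → k ∣ 1) →
    Hz (dbl 0 l) (dbl 0 (List.replicate l.length 1)) := by
  induction n using Nat.strong_induction_on with
  | _ n ih =>
    intro l hn hne hodd hg
    by_cases hall : ∃ a ∈ l, ∃ b ∈ l, b.natAbs < a.natAbs
    · obtain ⟨a, ha, b, hb, hlt⟩ := hall
      have hab : b ≠ a := by rintro rfl; exact lt_irrefl _ hlt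
      have hb' : b ∈ l.erase a := (List.mem_erase_of_ne hab).2 hb
      obtain ⟨r, hr⟩ : ∃ r, l.Perm (a :: b :: r) :=
        ⟨_, (List.perm_cons_erase ha).trans ((List.perm_cons_erase hb').cons a)⟩
      have hsum := (hr.map Int.natAbs).sum_eq
      simp only [List.map_cons, List.sum_cons] at hsum
      have hoa := hodd a ha
      have hob := hodd b hb
      have key : ∀ a' : ℤ, Hz (dbl 0 (a :: b :: r)) (dbl 0 (a' :: b :: r)) →
          a'.natAbs < a.natAbs → Odd a' → (∀ k, k ∣ b → k ∣ a' → k ∣ a) →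
          Hz (dbl 0 l) (dbl 0 (List.replicate l.length 1)) := by
        intro a' h1 h2 h3 h4
        rw [show l.length = (a' :: b :: r).length by simpa using hr.length_eq]
        refine (K_perm hr).trans (h1.trans (ih _ ?_ _ le_rfl (by simp) ?_ ?_))
        · simp only [List.map_cons, List.sum_cons]; omega
        · intro x hx
          rcases List.mem_cons.1 hx with rfl | hx
          · exact h3
          · exact hodd x (hr.mem_iff.2 (List.mem_cons_of_mem _ hx))
        · intro k hk
          refine hg k fun x hx => ?_
          rcases List.mem_cons.1 (hr.mem_iff.1 hx) with rfl | hx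
          · exact h4 k (hk b (by simp)) (hk a' (by simp))
          · exact hk x (List.mem_cons_of_mem _ hx)
      have hb0 : b ≠ 0 := by rintro rfl; simp at hob
      by_cases h : (2 * b - a).natAbs < a.natAbs
      · refine key _ (K_sub a b r) h ((even_two_mul b).sub_odd hoa) fun k h1 h2 => ?_
        have := dvd_sub (h1.mul_left 2) h2
        rwa [show 2 * b - (2 * b - a) = a by ring] at this
      · refine key _ (K_add a b r) (by omega) (hoa.add_even (even_two_mul b)) fun k h1 h2 => ?_
        have := dvd_sub h2 (h1.mul_left 2)
        rwa [show a + 2 * b - 2 * b = a by ring] at this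
    · push Not at hall
      apply K_ones
      intro x hx
      have := hg x fun y hy => by
        rw [← Int.natAbs_dvd_natAbs, le_antisymm (hall x hx y hy) (hall y hy x hx)]
      exact Int.isUnit_iff_natAbs_eq.1 (isUnit_of_dvd_one this)

theorem count_of_mem_E {d : ℕ} (v : Fin d → ℤ) (h : (fun i => (v i : ZMod 2)) ∈ Eset d) :
    ∃ t : ZMod 2, ((0 :: List.ofFn v).map (fun x : ℤ => (x : ZMod 2))).count t = 1 := by
  have e : (List.ofFn v).map (fun x : ℤ => (x : ZMod 2)) = List.ofFn (fun i => (v i : ZMod 2)) := by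
    rw [List.map_ofFn]; rfl
  rw [List.map_cons, e]
  rcases h with h | ⟨q, hq⟩
  · refine ⟨0, ?_⟩
    rw [h]
    simp [List.ofFn_const, List.count_replicate]
  · refine ⟨1, ?_⟩
    rw [← hq]
    simp only [Int.cast_zero, List.count_cons]
    rw [List.ofFn_eq_map, List.count, List.countP_map, ← List.count_eq_one_of_mem
      (List.nodup_finRange d) (List.mem_finRange q), List.count]
    simp only [beq_iff_eq, zero_ne_one, if_false, add_zero]
    apply List.countP_congr
    intro x _
    by_cases hx : x = q <;> simp [hx]

theorem to_canon {d g : ℕ} (hd : d = 2 * g) (hg : 0 < g) (v : Fin d → ℤ) (hv : Good v) :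
    Orb v (dvec d (dbl 0 (List.replicate g 1))) := by
  have hv0 : dvec d (0 :: List.ofFn v) = v := by
    ext r
    simp [dvec]
  have hlen : (0 :: List.ofFn v).length = d + 1 := by simp
  obtain ⟨c, as, has, h⟩ := exists_dbl g (0 :: List.ofFn v) (by rw [hlen, hd])
  have h1 : Orb v (dvec d (dbl c as)) := by
    have := h.orb d [] (by simpa using hlen)
    simpa only [List.nil_append, hv0] using this
  have hlen' : (dbl c as).length = d + 1 := by rw [← h.length, hlen]
  rw [← vec_shift d c _ hlen', ← dbl_shift] at h1
  refine h1.trans ?_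
  have hl : (as.map (· - c)).length = g := by simp [has]
  have K := K_main _ (as.map (· - c)) le_rfl (by
      intro h0; rw [h0] at hl; simp at hl; omega) (by
      obtain ⟨t, ht⟩ := count_of_mem_E v hv.2
      rw [h.perm.count_eq, count_dbl] at ht
      have hc : (c : ZMod 2) = t := by by_contra hc; rw [if_neg hc] at ht; omega
      rw [if_pos hc] at ht
      have h0 : (as.map (fun x : ℤ => (x : ZMod 2))).count t = 0 := by omega
      rw [List.count_eq_zero] at h0
      intro x hx
      obtain ⟨a, ha, rfl⟩ := List.mem_map.1 hx
      rw [← Int.not_even_iff_odd, even_iff_two_dvd]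
      intro hdv
      apply h0
      refine List.mem_map.2 ⟨a, ha, ?_⟩
      have := (ZMod.intCast_zmod_eq_zero_iff_dvd (a - c) 2).2 (by exact_mod_cast hdv)
      push_cast at this
      rw [← hc]
      exact sub_eq_zero.1 this) (by
      intro k hk
      refine (gcd_one_iff v).1 hv.1 k ?_
      have h2 : ∀ x ∈ dbl c as, k ∣ x - c := by
        intro x hx
        rcases (mem_dbl c x as).1 hx with hx | rfl
        · exact hk _ (List.mem_map.2 ⟨x, hx, rfl⟩)
        · simp
      rw [← h.dvd] at h2
      intro i
      have h3 := h2 0 (by simp)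
      have h4 := h2 (v i) (List.mem_cons_of_mem _ (by simp [List.mem_ofFn]))
      have := dvd_sub h4 h3
      rwa [show v i - c - (0 - c) = v i by ring] at this)
  rw [hl] at K
  exact K.orb d [] (by rw [List.nil_append, length_dbl, hl, hd])

/-- For `d` even, the orbit of `e_p` under `G_d` is the set of primitive vectors of
`ℤ^{A_d}` whose reduction mod 2 lies in `E = {ē*} ∪ {ē_q}`. -/
theorem orbit_even (d : ℕ) (hd : 2 ≤ d) (he : Even d) (p : Fin d) :
    {v : Fin d → ℤ | ∃ B ∈ Gd d,
        (B : Matrix (Fin d) (Fin d) ℤ).mulVec (Pi.single p 1) = v} =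
      {v : Fin d → ℤ | Finset.univ.gcd v = 1 ∧ (fun i => (v i : ZMod 2)) ∈ Eset d} := by
  obtain ⟨g, hg⟩ := he
  have hg' : d = 2 * g := by omega
  ext v
  constructor
  · intro h
    exact good_orb (v := Pi.single p 1) (w := v) h (good_single p)
  · intro h
    exact (to_canon hg' (by omega) _ (good_single p)).trans (to_canon hg' (by omega) v h).symm
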